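/- Let d ≥ 1 and let f : ℝ^d → ℝ be three times continuously differentiable with ‖D^k f(x)‖ ≤ M for all x and k = 1, 2, 3. Let h_1,…,h_d > 0 with h := max_μ h_μ ≤ 1, let x₀ ∈ ℝ^d, and let p be the quadratic polynomial in the normalized coordinates ξ_μ = (x_μ − x₀_μ)/h_μ whose coefficients are the centered finite-difference formulas built from point values of f on the stencil around x₀ (a₀ = f(x₀); a_μ = (f(x₀+h_μe_μ)−f(x₀−h_μe_μ))/2; a_{μμ} = (f(x₀+h_μe_μ)+f(x₀−h_μe_μ))/2 − f(x₀); a_{μν} = (1/4)(f(x₀+h_μe_μ+h_νe_ν)+f(x₀−h_μe_μ−h_νe_ν)−f(x₀+h_μe_μ−h_νe_ν)−f(x₀−h_μe_μ+h_νe_ν))). Let x* ∈ ℝ^d satisfy |x*_μ − x₀_μ| ≤ h_μ/2 for all μ, and let x̂ ∈ ℝ^d satisfy ‖x̂ − x*‖_∞ ≤ C₀ h⁴ for some constant C₀. Then there is a constant C depending only on d, M, and C₀ such that |p(x̂) − f(x*)| ≤ C h³. -/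

import Mathlib

section TaylorEstimates

variable {E : Type*} [NormedAddCommGroup E] [NormedSpace ℝ E] {f : E → ℝ} {M : ℝ}

theorem norm_fderiv_fderiv_sub_le (hf : ContDiff ℝ 3 f)
    (hM : ∀ x, ‖iteratedFDeriv ℝ 3 f x‖ ≤ M) (x y : E) :
    ‖fderiv ℝ (fderiv ℝ f) y - fderiv ℝ (fderiv ℝ f) x‖ ≤ M * ‖y - x‖ := by
  have h2 : ContDiff ℝ 2 (fderiv ℝ f) := hf.fderiv_right (by norm_num)
  have h1 : ContDiff ℝ 1 (fderiv ℝ (fderiv ℝ f)) := h2.fderiv_right (by norm_num)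
  refine convex_univ.norm_image_sub_le_of_norm_fderiv_le (𝕜 := ℝ)
    (fun z _ => (h1.differentiable (by norm_num)) z) (fun z _ => ?_) (Set.mem_univ x)
    (Set.mem_univ y)
  have h := hM z
  rwa [← norm_iteratedFDeriv_fderiv, ← norm_iteratedFDeriv_fderiv,
    ← norm_iteratedFDeriv_fderiv, norm_iteratedFDeriv_zero] at h

theorem ContDiff.fderiv_fderiv_comm (hf : ContDiff ℝ 3 f) (x u v : E) :
    fderiv ℝ (fderiv ℝ f) x u v = fderiv ℝ (fderiv ℝ f) x v u :=
  (hf.contDiffAt.isSymmSndFDerivAt (by simp; norm_num)) u v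

/-- The increment of `fderiv ℝ f` over `[a, b]` is close to its linearization at a nearby `x`. -/
theorem norm_fderiv_sub_sub_le (hf : ContDiff ℝ 3 f)
    (hM : ∀ x, ‖iteratedFDeriv ℝ 3 f x‖ ≤ M) {x a b : E} {r : ℝ}
    (ha : ‖a - x‖ ≤ r) (hb : ‖b - x‖ ≤ r) :
    ‖fderiv ℝ f b - fderiv ℝ f a - fderiv ℝ (fderiv ℝ f) x (b - a)‖ ≤ M * r * ‖b - a‖ := by
  have h2 : ContDiff ℝ 2 (fderiv ℝ f) := hf.fderiv_right (by norm_num)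
  have hM0 : 0 ≤ M := (norm_nonneg _).trans (hM x)
  refine (convex_closedBall x r).norm_image_sub_le_of_norm_fderiv_le' (𝕜 := ℝ)
    (fun z _ => (h2.differentiable (by norm_num)) z) (fun z hz => ?_)
    (mem_closedBall_iff_norm.2 ha) (mem_closedBall_iff_norm.2 hb)
  exact (norm_fderiv_fderiv_sub_le hf hM x z).trans
    (mul_le_mul_of_nonneg_left (mem_closedBall_iff_norm.1 hz) hM0)

theorem abs_sub_taylor_two_le (hf : ContDiff ℝ 3 f)
    (hM : ∀ x, ‖iteratedFDeriv ℝ 3 f x‖ ≤ M) (x v : E) :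
    |f (x + v) - f x - fderiv ℝ f x v - 1 / 2 * fderiv ℝ (fderiv ℝ f) x v v|
      ≤ M * ‖v‖ ^ 3 := by
  have hM0 : 0 ≤ M := (norm_nonneg _).trans (hM x)
  set A := fderiv ℝ f x
  set B := fderiv ℝ (fderiv ℝ f) x
  have hder (w : E) : HasFDerivAt (fun w => f (x + w) - A w - 1 / 2 * B w w)
      (fderiv ℝ f (x + w) - A - B w) w := by
    have h1 : HasFDerivAt (fun w => f (x + w)) (fderiv ℝ f (x + w)) w := by
      rw [hasFDerivAt_comp_add_left]
      exact (hf.differentiable (by norm_num) _).hasFDerivAt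
    have h2 := (B.hasFDerivAt (x := w)).clm_apply (hasFDerivAt_id w)
    refine ((h1.sub (A.hasFDerivAt (x := w))).sub (h2.const_mul (1 / 2))).congr_fderiv ?_
    ext z
    have hs : B z w = B w z := hf.fderiv_fderiv_comm x z w
    simp [hs]
    ring
  have h := (convex_closedBall (0 : E) ‖v‖).norm_image_sub_le_of_norm_hasFDerivWithin_le
    (C := M * ‖v‖ ^ 2) (fun w _ => (hder w).hasFDerivWithinAt) (fun w hw => ?_)
    (x := 0) (y := v) (by simp) (by simp)
  · simp only [sub_zero, add_zero, map_zero, Real.norm_eq_abs, mul_zero] at h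
    calc _ = |f (x + v) - A v - 1 / 2 * B v v - f x| := by congr 1; ring
      _ ≤ _ := h
      _ = _ := by ring
  · have hw' : ‖w‖ ≤ ‖v‖ := by simpa using hw
    have := norm_fderiv_sub_sub_le hf hM (x := x) (a := x) (b := x + w) (r := ‖v‖)
      (by simp) (by simpa using hw')
    rw [add_sub_cancel_left] at this
    calc _ ≤ _ := this
      _ ≤ M * ‖v‖ * ‖v‖ := by gcongr
      _ = _ := by ring

theorem abs_centered_difference_sub_le (hf : ContDiff ℝ 3 f)
    (hM : ∀ x, ‖iteratedFDeriv ℝ 3 f x‖ ≤ M) (x u : E) :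
    |(f (x + u) - f (x - u)) / 2 - fderiv ℝ f x u| ≤ M * ‖u‖ ^ 3 := by
  have h1 := abs_le.1 (abs_sub_taylor_two_le hf hM x u)
  have h2 := abs_le.1 (abs_sub_taylor_two_le hf hM x (-u))
  simp only [norm_neg, map_neg, neg_apply, neg_neg, ← sub_eq_add_neg] at h2
  rw [abs_le]
  constructor <;> linarith

theorem abs_second_difference_sub_le (hf : ContDiff ℝ 3 f)
    (hM : ∀ x, ‖iteratedFDeriv ℝ 3 f x‖ ≤ M) (x u : E) :
    |(f (x + u) + f (x - u)) / 2 - f x - 1 / 2 * fderiv ℝ (fderiv ℝ f) x u u|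
      ≤ M * ‖u‖ ^ 3 := by
  have h1 := abs_le.1 (abs_sub_taylor_two_le hf hM x u)
  have h2 := abs_le.1 (abs_sub_taylor_two_le hf hM x (-u))
  simp only [norm_neg, map_neg, neg_apply, neg_neg, ← sub_eq_add_neg] at h2
  rw [abs_le]
  constructor <;> linarith

theorem abs_mixed_difference_sub_le (hf : ContDiff ℝ 3 f)
    (hM : ∀ x, ‖iteratedFDeriv ℝ 3 f x‖ ≤ M) (x u v : E) :
    |1 / 4 * (f (x + u + v) + f (x - u - v) - f (x + u - v) - f (x - u + v))
        - fderiv ℝ (fderiv ℝ f) x u v| ≤ M * ‖u‖ * ‖v‖ * (‖u‖ + ‖v‖) := by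
  have hM0 : 0 ≤ M := (norm_nonneg _).trans (hM x)
  set B := fderiv ℝ (fderiv ℝ f) x
  have hshift (c w : E) : HasFDerivAt (fun w => f (x + w + c)) (fderiv ℝ f (x + w + c)) w := by
    have := (hf.differentiable (by norm_num) (x + w + c)).hasFDerivAt
    exact this.comp w (((hasFDerivAt_id w).const_add x).add_const c)
  have hder (w : E) : HasFDerivAt (fun w => f (x + w + v) - f (x + w + -v) - 2 * B v w)
      (fderiv ℝ f (x + w + v) - fderiv ℝ f (x + w + -v) - (2 : ℝ) • B v) w :=
    ((hshift v w).sub (hshift (-v) w)).sub (((B v).hasFDerivAt (x := w)).const_mul 2)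
  have h := (convex_closedBall (0 : E) ‖u‖).norm_image_sub_le_of_norm_hasFDerivWithin_le
    (C := 2 * M * (‖u‖ + ‖v‖) * ‖v‖) (fun w _ => (hder w).hasFDerivWithinAt) (fun w hw => ?_)
    (x := -u) (y := u) (by simp) (by simp)
  · have hs : B v u = B u v := hf.fderiv_fderiv_comm x v u
    have hu : ‖u - -u‖ = 2 * ‖u‖ := by
      rw [sub_neg_eq_add, ← two_smul ℝ u, norm_smul]; simp
    rw [hu] at h
    simp only [map_neg, Real.norm_eq_abs, ← sub_eq_add_neg, hs] at h
    have h' := abs_le.1 h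
    rw [abs_le]
    constructor <;> linarith
  · have hw' : ‖w‖ ≤ ‖u‖ := by simpa using hw
    have h1 : ‖x + w + v - x‖ ≤ ‖u‖ + ‖v‖ := by
      rw [add_assoc, add_sub_cancel_left]
      exact (norm_add_le _ _).trans (by gcongr)
    have h2 : ‖x + w + -v - x‖ ≤ ‖u‖ + ‖v‖ := by
      rw [add_assoc, add_sub_cancel_left]
      exact (norm_add_le _ _).trans (by rw [norm_neg]; gcongr)
    have h3 := norm_fderiv_sub_sub_le hf hM h2 h1
    have hv : x + w + v - (x + w + -v) = (2 : ℝ) • v := by rw [two_smul]; abel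
    rw [hv, map_smul, norm_smul, Real.norm_eq_abs, abs_two] at h3
    exact h3.trans_eq (by ring)

end TaylorEstimates

theorem Finset.sum_sum_eq_sum_diag_add_two_mul_sum_lt {ι : Type*} [Fintype ι] [LinearOrder ι]
    (b : ι → ι → ℝ) (hb : ∀ i j, b i j = b j i) :
    ∑ i, ∑ j, b i j = ∑ i, b i i + 2 * ∑ i, ∑ j, if i < j then b i j else 0 := by
  have h1 : ∀ i j, b i j = (if i = j then b i j else 0) + (if i < j then b i j else 0)
      + (if j < i then b j i else 0) := by
    intro i j
    rcases lt_trichotomy i j with h | h | h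
    · simp [h, h.ne, h.not_gt]
    · simp [h]
    · simp [h, h.ne', h.not_gt, hb i j]
  have h2 : ∑ i, ∑ j, (if j < i then b j i else 0) = ∑ i, ∑ j, if i < j then b i j else 0 :=
    Finset.sum_comm
  calc ∑ i, ∑ j, b i j = ∑ i, ∑ j, ((if i = j then b i j else 0) + (if i < j then b i j else 0)
      + (if j < i then b j i else 0)) := by simp_rw [← h1]
    _ = _ := by
      simp only [Finset.sum_add_distrib, h2, Finset.sum_ite_eq, Finset.mem_univ, if_true]
      ring

theorem abs_sum_le_card_mul {ι : Type*} [Fintype ι] {g : ι → ℝ} {c : ℝ} (hg : ∀ i, |g i| ≤ c) :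
    |∑ i, g i| ≤ Fintype.card ι * c :=
  (Finset.abs_sum_le_sum_abs _ _).trans
    ((Finset.sum_le_card_nsmul _ _ c fun i _ => hg i).trans_eq (by simp))

/-- The centered finite-difference quadratic interpolant of `f` at `x`, along directions `e i`
with normalized coordinates `ξ i`, is third-order accurate. -/
theorem abs_quadratic_interpolant_sub_le {E ι : Type*} [NormedAddCommGroup E] [NormedSpace ℝ E]
    [Fintype ι] [LinearOrder ι] {f : E → ℝ} {M H R : ℝ} (hf : ContDiff ℝ 3 f)
    (hM : ∀ x, ‖iteratedFDeriv ℝ 3 f x‖ ≤ M) (x : E) (e : ι → E) (ξ : ι → ℝ)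
    (hH : 0 ≤ H) (hR : 0 ≤ R) (he : ∀ i, ‖e i‖ ≤ H) (hξ : ∀ i, ‖e i‖ * |ξ i| ≤ R) :
    |f x + ∑ i, (f (x + e i) - f (x - e i)) / 2 * ξ i
        + ∑ i, ((f (x + e i) + f (x - e i)) / 2 - f x) * ξ i ^ 2
        + ∑ i, ∑ j, (if i < j then
            (1 / 4) * (f (x + e i + e j) + f (x - e i - e j) - f (x + e i - e j)
              - f (x - e i + e j)) * ξ i * ξ j else 0)
        - f (x + ∑ i, ξ i • e i)|
      ≤ M * (Fintype.card ι * (H ^ 2 * R) + Fintype.card ι * (H * R ^ 2)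
        + Fintype.card ι * (Fintype.card ι * (2 * H * R ^ 2)) + (Fintype.card ι * R) ^ 3) := by
  have hM0 : 0 ≤ M := (norm_nonneg _).trans (hM x)
  set y := ∑ i, ξ i • e i with hy
  set A := fderiv ℝ f x
  set B := fderiv ℝ (fderiv ℝ f) x
  have hA : A y = ∑ i, A (e i) * ξ i := by
    simp [hy, map_sum, mul_comm]
  have hB : B y y = ∑ i, B (e i) (e i) * ξ i ^ 2
      + 2 * ∑ i, ∑ j, if i < j then B (e i) (e j) * ξ i * ξ j else 0 := by
    have h1 : B y y = ∑ i, ∑ j, B (e i) (e j) * ξ i * ξ j := by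
      simp only [hy, map_sum, map_smul, sum_apply, smul_apply, smul_eq_mul, Finset.mul_sum]
      rw [Finset.sum_comm]
      refine Finset.sum_congr rfl fun i _ => Finset.sum_congr rfl fun j _ => by ring
    rw [h1, Finset.sum_sum_eq_sum_diag_add_two_mul_sum_lt]
    · simp only [pow_two, mul_assoc]
    · intro i j
      have : B (e i) (e j) = B (e j) (e i) := hf.fderiv_fderiv_comm x _ _
      rw [this]; ring
  have hynorm : ‖y‖ ≤ Fintype.card ι * R := by
    refine (norm_sum_le_of_le _ (fun i _ => ?_)).trans_eq (by simp : ∑ _i : ι, R = _)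
    rw [norm_smul, mul_comm]
    exact hξ i
  have hlin : |∑ i, ((f (x + e i) - f (x - e i)) / 2 - A (e i)) * ξ i|
      ≤ Fintype.card ι * (M * (H ^ 2 * R)) := by
    refine abs_sum_le_card_mul fun i => ?_
    rw [abs_mul]
    calc _ ≤ M * ‖e i‖ ^ 3 * |ξ i| := by
          gcongr; exact abs_centered_difference_sub_le hf hM x (e i)
      _ = M * (‖e i‖ ^ 2 * (‖e i‖ * |ξ i|)) := by ring
      _ ≤ _ := by gcongr; exacts [he i, hξ i]
  have hdiag : |∑ i, ((f (x + e i) + f (x - e i)) / 2 - f x - 1 / 2 * B (e i) (e i)) * ξ i ^ 2|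
      ≤ Fintype.card ι * (M * (H * R ^ 2)) := by
    refine abs_sum_le_card_mul fun i => ?_
    rw [abs_mul, abs_pow]
    calc _ ≤ M * ‖e i‖ ^ 3 * |ξ i| ^ 2 := by
          gcongr; exact abs_second_difference_sub_le hf hM x (e i)
      _ = M * (‖e i‖ * (‖e i‖ * |ξ i|) ^ 2) := by ring
      _ ≤ _ := by gcongr; exacts [he i, hξ i]
  have hmixed : |∑ i, ∑ j, if i < j then ((1 / 4) * (f (x + e i + e j) + f (x - e i - e j)
      - f (x + e i - e j) - f (x - e i + e j)) - B (e i) (e j)) * ξ i * ξ j else 0|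
      ≤ Fintype.card ι * (Fintype.card ι * (M * (2 * H * R ^ 2))) := by
    refine abs_sum_le_card_mul fun i => ?_
    refine abs_sum_le_card_mul fun j => ?_
    split_ifs
    · rw [abs_mul, abs_mul]
      calc _ ≤ M * ‖e i‖ * ‖e j‖ * (‖e i‖ + ‖e j‖) * |ξ i| * |ξ j| := by
            gcongr; exact abs_mixed_difference_sub_le hf hM x (e i) (e j)
        _ = M * ((‖e i‖ + ‖e j‖) * ((‖e i‖ * |ξ i|) * (‖e j‖ * |ξ j|))) := by ring
        _ ≤ M * ((H + H) * (R * R)) := by gcongr; exacts [he i, he j, hξ i, hξ j]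
        _ = _ := by ring
    · rw [abs_zero]; positivity
  have htaylor : |f (x + y) - f x - A y - 1 / 2 * B y y| ≤ M * (Fintype.card ι * R) ^ 3 :=
    (abs_sub_taylor_two_le hf hM x y).trans (by gcongr)
  have hmixed_eq : (∑ i, ∑ j, if i < j then ((1 / 4) * (f (x + e i + e j) + f (x - e i - e j)
      - f (x + e i - e j) - f (x - e i + e j)) - B (e i) (e j)) * ξ i * ξ j else 0)
      = (∑ i, ∑ j, if i < j then (1 / 4) * (f (x + e i + e j) + f (x - e i - e j)
        - f (x + e i - e j) - f (x - e i + e j)) * ξ i * ξ j else 0)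
        - ∑ i, ∑ j, if i < j then B (e i) (e j) * ξ i * ξ j else 0 := by
    simp only [← Finset.sum_sub_distrib]
    refine Finset.sum_congr rfl fun i _ => Finset.sum_congr rfl fun j _ => ?_
    split_ifs <;> ring
  rw [hmixed_eq] at hmixed
  simp only [sub_mul _ (A _), sub_mul _ (1 / 2 * B _ _), Finset.sum_sub_distrib,
    mul_assoc (1 / 2 : ℝ), ← Finset.mul_sum] at hlin hdiag
  rw [hA, hB] at htaylor
  rw [abs_le] at hlin hdiag hmixed htaylor ⊢
  constructor <;> linarith

/-- Proposition 2.1 of the paper. Let `d ≥ 1` and `f : ℝ^d → ℝ` be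
three times continuously differentiable with `‖D^k f x‖ ≤ M` for all `x` and
`k = 1, 2, 3`. Let `h μ > 0` with maximum `H ≤ 1`, and `x₀ ∈ ℝ^d`. Let `p` be the
quadratic polynomial in the normalized coordinates `ξ μ = (x μ - x₀ μ)/h μ` whose
coefficients are the centered finite-difference formulas built from point values of
`f` on the stencil around `x₀`. Let `xstar` satisfy `|xstar μ - x₀ μ| ≤ h μ / 2` for
all `μ`, and let `xhat` satisfy `‖xhat - xstar‖_∞ ≤ C₀ * H ^ 4`. Then there is a
constant `C` depending only on `d`, `M`, and `C₀` such that
`|p xhat - f xstar| ≤ C * H ^ 3`. (The norm on `Fin d → ℝ` is the sup norm.) -/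
theorem stmt9 (d : ℕ) (hd : 1 ≤ d) (M C₀ : ℝ) :
    ∃ C : ℝ, ∀ (f : (Fin d → ℝ) → ℝ), ContDiff ℝ 3 f →
      (∀ x, ‖iteratedFDeriv ℝ 1 f x‖ ≤ M ∧ ‖iteratedFDeriv ℝ 2 f x‖ ≤ M ∧
        ‖iteratedFDeriv ℝ 3 f x‖ ≤ M) →
      ∀ (h : Fin d → ℝ), (∀ μ, 0 < h μ) →
      ∀ (H : ℝ), IsGreatest (Set.range h) H → H ≤ 1 →
      ∀ (x₀ xstar xhat : Fin d → ℝ), (∀ μ, |xstar μ - x₀ μ| ≤ h μ / 2) →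
        ‖xhat - xstar‖ ≤ C₀ * H ^ 4 →
        |(f x₀
          + ∑ μ, (f (x₀ + Pi.single μ (h μ)) - f (x₀ - Pi.single μ (h μ))) / 2
              * ((xhat μ - x₀ μ) / h μ)
          + ∑ μ, ((f (x₀ + Pi.single μ (h μ)) + f (x₀ - Pi.single μ (h μ))) / 2 - f x₀)
              * ((xhat μ - x₀ μ) / h μ) ^ 2
          + ∑ μ, ∑ ν, (if μ < ν then
              (1 / 4) * (f (x₀ + Pi.single μ (h μ) + Pi.single ν (h ν))
                  + f (x₀ - Pi.single μ (h μ) - Pi.single ν (h ν))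
                  - f (x₀ + Pi.single μ (h μ) - Pi.single ν (h ν))
                  - f (x₀ - Pi.single μ (h μ) + Pi.single ν (h ν)))
                * ((xhat μ - x₀ μ) / h μ) * ((xhat ν - x₀ ν) / h ν)
            else 0))
          - f xstar| ≤ C * H ^ 3 := by
  refine ⟨M * (d * (1 / 2 + C₀) + d * (1 / 2 + C₀) ^ 2 + d * (d * (2 * (1 / 2 + C₀) ^ 2))
    + (d * (1 / 2 + C₀)) ^ 3) + M * C₀, ?_⟩
  intro f hf hfM h hpos H hH hH1 x₀ xstar xhat hstar hhat
  have hle (μ : Fin d) : h μ ≤ H := hH.2 (Set.mem_range_self μ)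
  have hH0 : 0 < H := (hpos ⟨0, hd⟩).trans_le (hle _)
  have hM0 : 0 ≤ M := (norm_nonneg _).trans (hfM 0).1
  have hC0 : 0 ≤ C₀ := nonneg_of_mul_nonneg_left ((norm_nonneg _).trans hhat) (by positivity)
  have hH4 : H ^ 4 ≤ H ^ 3 := pow_le_pow_of_le_one hH0.le hH1 (by norm_num)
  have hHH : H ^ 4 ≤ H := pow_le_of_le_one hH0.le hH1 (by norm_num)
  have hnorm (μ : Fin d) : ‖(Pi.single μ (h μ) : Fin d → ℝ)‖ = h μ := by
    rw [Pi.norm_single, Real.norm_of_nonneg (hpos μ).le]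
  have hξ (μ : Fin d) : ‖(Pi.single μ (h μ) : Fin d → ℝ)‖ * |(xhat μ - x₀ μ) / h μ|
      ≤ (1 / 2 + C₀) * H := by
    rw [hnorm, abs_div, abs_of_pos (hpos μ), mul_div_cancel₀ _ (hpos μ).ne']
    have h1 : |xhat μ - xstar μ| ≤ C₀ * H ^ 4 := (norm_le_pi_norm (xhat - xstar) μ).trans hhat
    have h2 : C₀ * H ^ 4 ≤ C₀ * H := by gcongr
    have h3 := abs_sub_le (xhat μ) (xstar μ) (x₀ μ)
    linarith [hstar μ, hle μ]
  have hsum : x₀ + ∑ μ, ((xhat μ - x₀ μ) / h μ) • (Pi.single μ (h μ) : Fin d → ℝ) = xhat := by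
    have (μ : Fin d) : ((xhat μ - x₀ μ) / h μ) • (Pi.single μ (h μ) : Fin d → ℝ)
        = Pi.single μ ((xhat - x₀) μ) := by
      rw [← Pi.single_smul, smul_eq_mul, div_mul_cancel₀ _ (hpos μ).ne', Pi.sub_apply]
    simp only [this, Finset.univ_sum_single, add_sub_cancel]
  have hint := abs_quadratic_interpolant_sub_le hf (fun x => (hfM x).2.2) x₀
    (fun μ => Pi.single μ (h μ)) (fun μ => (xhat μ - x₀ μ) / h μ) hH0.le
    (R := (1 / 2 + C₀) * H) (by positivity) (fun μ => (hnorm μ).trans_le (hle μ)) hξ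
  simp only [hsum, Fintype.card_fin] at hint
  have hfoot : |f xhat - f xstar| ≤ M * C₀ * H ^ 3 := by
    have h1 : ‖f xhat - f xstar‖ ≤ M * ‖xhat - xstar‖ := by
      refine convex_univ.norm_image_sub_le_of_norm_fderiv_le (𝕜 := ℝ)
        (fun z _ => hf.differentiable (by norm_num) z) (fun z _ => ?_) (Set.mem_univ _)
        (Set.mem_univ _)
      rw [← norm_iteratedFDeriv_one]
      exact (hfM z).1
    calc _ ≤ M * ‖xhat - xstar‖ := h1
      _ ≤ M * (C₀ * H ^ 3) := by gcongr; exact hhat.trans (by gcongr)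
      _ = _ := by ring
  refine (abs_sub_le _ (f xhat) _).trans ((add_le_add hint hfoot).trans_eq ?_)
  ring
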